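/- Let f: ℝⁿ → ℝ be differentiable with ‖∇f(x)‖₂ ≤ L for all x. Then for independent standard Gaussian X ∼ N(0, Iₙ), Pr[|f(X) − E f(X)| ≥ t] ≤ 2·exp(−t²/(K·L²)) for a universal constant K > 0. -/

import Mathlib

open MeasureTheory ProbabilityTheory Real

namespace GaussConc

variable {n : ℕ}

local notation "EE" => EuclideanSpace ℝ (Fin n)

/-- The directional derivative as a function on the product space. -/
noncomputable def dirD (f : EuclideanSpace ℝ (Fin n) → ℝ)
    (p : EuclideanSpace ℝ (Fin n) × EuclideanSpace ℝ (Fin n)) : ℝ := fderiv ℝ f p.1 p.2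

lemma measurable_dirD (f : EE → ℝ) : Measurable (dirD f) := by
  have h1 : Measurable (fun p : EE × EE => fderiv ℝ f p.1) :=
    (measurable_fderiv ℝ f).comp measurable_fst
  have h2 : Continuous (fun q : (EE →L[ℝ] ℝ) × EE => q.1 q.2) := by fun_prop
  exact h2.measurable.comp (h1.prodMk measurable_snd)

lemma continuous_rot :
    Continuous (fun q : (EE × EE) × ℝ => ContinuousLinearMap.rotation (π / 2 * q.2) q.1) := by
  simp only [ContinuousLinearMap.rotation_apply]
  fun_prop

lemma jensen_path (f : EE → ℝ) (L s : ℝ) (hf : Differentiable ℝ f)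
    (hL : ∀ x, ‖fderiv ℝ f x‖ ≤ L) (p : EE × EE) :
    ENNReal.ofReal (exp (s * (f p.2 - f p.1))) ≤
      ∫⁻ u in Set.Ioc (0 : ℝ) 1,
        ENNReal.ofReal (exp ((s * (π / 2)) *
          dirD f (ContinuousLinearMap.rotation (π / 2 * u) p))) := by
  set g : ℝ → ℝ := fun u => (s * (π / 2)) *
          dirD f (ContinuousLinearMap.rotation (π / 2 * u) p) with hg
  have hrot : Continuous (fun u : ℝ => ContinuousLinearMap.rotation (π / 2 * u) p) := by
    simp only [ContinuousLinearMap.rotation_apply]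
    fun_prop
  have hgm : Measurable g :=
    ((measurable_dirD f).comp hrot.measurable).const_mul _
  have hL0 : 0 ≤ L := (norm_nonneg _).trans (hL 0)
  have hgb : ∀ u, |g u| ≤ |s * (π / 2)| * (L * (‖p.1‖ + ‖p.2‖)) := by
    intro u
    simp only [hg, abs_mul _ (dirD f _)]
    gcongr
    refine ((fderiv ℝ f (ContinuousLinearMap.rotation (π / 2 * u) p).1).le_opNorm
      (ContinuousLinearMap.rotation (π / 2 * u) p).2).trans ?_
    gcongr
    · exact hL _
    · simp only [ContinuousLinearMap.rotation_apply]
      refine (norm_add_le _ _).trans ?_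
      simp only [norm_smul, norm_neg, Real.norm_eq_abs]
      have h1 := abs_sin_le_one (π / 2 * u)
      have h2 := abs_cos_le_one (π / 2 * u)
      have h3 := norm_nonneg p.1
      have h4 := norm_nonneg p.2
      nlinarith
  have hgi : Integrable g (volume.restrict (Set.Ioc (0 : ℝ) 1)) :=
    Integrable.of_bound hgm.aestronglyMeasurable _ (Filter.Eventually.of_forall hgb)
  have hei : Integrable (fun u => exp (g u)) (volume.restrict (Set.Ioc (0 : ℝ) 1)) := by
    refine Integrable.of_bound (C := exp (|s * (π / 2)| * (L * (‖p.1‖ + ‖p.2‖))))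
      hgm.exp.aestronglyMeasurable (Filter.Eventually.of_forall fun u => ?_)
    rw [Real.norm_eq_abs, abs_exp]
    exact exp_le_exp.2 ((le_abs_self _).trans (hgb u))
  have hprob : IsProbabilityMeasure (volume.restrict (Set.Ioc (0 : ℝ) 1)) :=
    ⟨by simp⟩
  have hder : ∀ u : ℝ, HasDerivAt
      (fun u => s * f (ContinuousLinearMap.rotation (π / 2 * u) p).1) (g u) u := by
    intro u
    have hθ : HasDerivAt (fun u : ℝ => π / 2 * u) (π / 2) u := by
      simpa using (hasDerivAt_id u).const_mul (π / 2)
    have hγ : HasDerivAt (fun u : ℝ => (ContinuousLinearMap.rotation (π / 2 * u) p).1)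
        ((π / 2) • (ContinuousLinearMap.rotation (π / 2 * u) p).2) u := by
      simp only [ContinuousLinearMap.rotation_apply]
      convert! (hθ.cos.smul_const p.1).add (hθ.sin.smul_const p.2) using 1
      simp only [smul_add, smul_smul]
      congr 2 <;> ring
    have := ((hf _).hasFDerivAt.comp_hasDerivAt u hγ).const_mul s
    convert! this using 1
    simp only [hg, dirD, map_smul, smul_eq_mul]
    ring
  have hFTC : ∫ u in Set.Ioc (0 : ℝ) 1, g u = s * (f p.2 - f p.1) := by
    rw [← intervalIntegral.integral_of_le zero_le_one,
      intervalIntegral.integral_eq_sub_of_hasDerivAt (fun u _ => hder u)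
        ((intervalIntegrable_iff_integrableOn_Ioc_of_le zero_le_one).2 hgi)]
    simp [ContinuousLinearMap.rotation_apply]
    ring
  rw [← ofReal_integral_eq_lintegral_ofReal hei
    (Filter.Eventually.of_forall fun u => (exp_pos _).le), ← hFTC]
  refine ENNReal.ofReal_le_ofReal ?_
  exact convexOn_exp.map_integral_le continuous_exp.continuousOn isClosed_univ
    (by simp) hgi hei

lemma mgf_dirD (f : EE → ℝ) (L a : ℝ) (hL : ∀ x, ‖fderiv ℝ f x‖ ≤ L) :
    ∫⁻ p, ENNReal.ofReal (exp (a * dirD f p)) ∂((stdGaussian EE).prod (stdGaussian EE)) ≤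
      ENNReal.ofReal (exp (a ^ 2 * L ^ 2 / 2)) := by
  rw [lintegral_prod _ (((measurable_dirD f).const_mul a).exp.ennreal_ofReal.aemeasurable)]
  have key : ∀ x : EE, ∫⁻ y, ENNReal.ofReal (exp (a * dirD f (x, y))) ∂(stdGaussian EE) ≤
      ENNReal.ofReal (exp (a ^ 2 * L ^ 2 / 2)) := by
    intro x
    set ℓ : StrongDual ℝ EE := fderiv ℝ f x with hℓ
    have hmap := IsGaussian.map_eq_gaussianReal (μ := stdGaussian EE) ℓ
    have hm := mgf_gaussianReal hmap a
    have hint : Integrable (fun y => exp (a * ℓ y)) (stdGaussian EE) := by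
      rw [← mgf_pos_iff, hm]
      exact exp_pos _
    simp only [dirD]
    rw [← ofReal_integral_eq_lintegral_ofReal hint
      (Filter.Eventually.of_forall fun u => (exp_pos _).le)]
    refine ENNReal.ofReal_le_ofReal ?_
    change mgf ℓ (stdGaussian EE) a ≤ _
    rw [hm, integral_strongDual_stdGaussian, variance_dual_stdGaussian]
    refine exp_le_exp.2 ?_
    rw [Real.coe_toNNReal _ (sq_nonneg _)]
    have : ‖ℓ‖ ^ 2 ≤ L ^ 2 := by
      have := hL x
      gcongr
    nlinarith [sq_nonneg a]
  calc _ ≤ ∫⁻ x : EE, ENNReal.ofReal (exp (a ^ 2 * L ^ 2 / 2)) ∂(stdGaussian EE) :=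
        lintegral_mono key
    _ = _ := by simp

lemma mgf_prod (f : EE → ℝ) (L s : ℝ) (hf : Differentiable ℝ f)
    (hL : ∀ x, ‖fderiv ℝ f x‖ ≤ L) :
    ∫⁻ p, ENNReal.ofReal (exp (s * (f p.2 - f p.1)))
      ∂((stdGaussian EE).prod (stdGaussian EE)) ≤
      ENNReal.ofReal (exp ((s * (π / 2)) ^ 2 * L ^ 2 / 2)) := by
  set P := (stdGaussian EE).prod (stdGaussian EE) with hP
  have hm : Measurable (fun p : EE × EE =>
      ENNReal.ofReal (exp ((s * (π / 2)) * dirD f p))) :=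
    ((measurable_dirD f).const_mul _).exp.ennreal_ofReal
  calc _ ≤ ∫⁻ p, (∫⁻ u in Set.Ioc (0 : ℝ) 1,
        ENNReal.ofReal (exp ((s * (π / 2)) *
          dirD f (ContinuousLinearMap.rotation (π / 2 * u) p)))) ∂P :=
        lintegral_mono fun p => jensen_path f L s hf hL p
    _ = ∫⁻ u in Set.Ioc (0 : ℝ) 1, (∫⁻ p,
        ENNReal.ofReal (exp ((s * (π / 2)) *
          dirD f (ContinuousLinearMap.rotation (π / 2 * u) p))) ∂P) := by
        refine lintegral_lintegral_swap (Measurable.aemeasurable ?_)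
        have hrm := (continuous_rot (n := n)).measurable
        have hcomp := Measurable.comp hm hrm
        simpa only [Function.uncurry_def, Function.comp_def] using hcomp
    _ ≤ ∫⁻ u in Set.Ioc (0 : ℝ) 1,
          ENNReal.ofReal (exp ((s * (π / 2)) ^ 2 * L ^ 2 / 2)) := by
        refine lintegral_mono fun u => ?_
        have hr : P.map (ContinuousLinearMap.rotation (π / 2 * u)) = P :=
          IsGaussian.map_rotation_eq_self_of_forall_strongDual_eq_zero
            (fun ℓ => integral_strongDual_stdGaussian ℓ) _
        have h := lintegral_map (μ := P) hm
          (ContinuousLinearMap.rotation (E := EE) (π / 2 * u)).continuous.measurable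
        rw [hr] at h
        simp only
        rw [← h]
        exact mgf_dirD f L _ hL
    _ = _ := by simp

lemma subG (f : EE → ℝ) (L : ℝ) (hf : Differentiable ℝ f)
    (hL : ∀ x, ‖fderiv ℝ f x‖ ≤ L) :
    HasSubgaussianMGF (fun x => f x - ∫ y, f y ∂(stdGaussian EE))
      ((π / 2) ^ 2 * L ^ 2).toNNReal (stdGaussian EE) := by
  set μ := stdGaussian EE with hμ
  set m := ∫ y, f y ∂μ with hm
  have hL0 : 0 ≤ L := (norm_nonneg _).trans (hL 0)
  have hlip : LipschitzWith L.toNNReal f := by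
    refine lipschitzWith_of_nnnorm_fderiv_le hf fun x => ?_
    rw [← NNReal.coe_le_coe, Real.coe_toNNReal _ hL0]
    exact hL x
  have hfi : Integrable f μ := by
    have h1 : Integrable (fun x : EE => |f 0| + L * ‖x‖) μ :=
      (integrable_const _).add ((IsGaussian.integrable_fun_id (μ := μ)).norm.const_mul L)
    refine h1.mono' hf.continuous.aestronglyMeasurable (Filter.Eventually.of_forall fun x => ?_)
    have h2 := hlip.dist_le_mul x 0
    rw [Real.coe_toNNReal _ hL0, dist_zero_right, Real.dist_eq] at h2
    rw [Real.norm_eq_abs]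
    have := abs_sub_abs_le_abs_sub (f x) (f 0)
    linarith
  have hfc := hf.continuous
  -- integrability on the product
  have hpi : ∀ s : ℝ, Integrable (fun p : EE × EE => exp (s * (f p.2 - f p.1))) (μ.prod μ) := by
    intro s
    refine ⟨Continuous.aestronglyMeasurable (by fun_prop), ?_⟩
    rw [hasFiniteIntegral_iff_ofReal (Filter.Eventually.of_forall fun u => (exp_pos _).le)]
    exact (mgf_prod f L s hf hL).trans_lt ENNReal.ofReal_lt_top
  have hpb : ∀ s : ℝ, ∫ p : EE × EE, exp (s * (f p.2 - f p.1)) ∂(μ.prod μ) ≤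
      exp ((s * (π / 2)) ^ 2 * L ^ 2 / 2) := by
    intro s
    have h := mgf_prod f L s hf hL
    rw [← ofReal_integral_eq_lintegral_ofReal (hpi s)
      (Filter.Eventually.of_forall fun u => (exp_pos _).le)] at h
    exact (ENNReal.ofReal_le_ofReal_iff (exp_pos _).le).1 h
  have hexp : ∀ s c : ℝ, Integrable (fun y => exp (s * (f y - c))) μ := by
    intro s c
    obtain ⟨x, hx⟩ := (hpi s).prod_right_ae.exists
    refine (hx.const_mul (exp (s * (f x - c)))).congr (Filter.Eventually.of_forall fun y => ?_)
    simp only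
    rw [← exp_add]
    congr 1
    ring
  refine ⟨fun s => hexp s m, fun s => ?_⟩
  rw [Real.coe_toNNReal _ (by positivity)]
  have hj : ∀ x, exp (s * (f x - m)) ≤ ∫ y, exp ((-s) * (f y - f x)) ∂μ := by
    intro x
    have h := convexOn_exp.map_integral_le (μ := μ) (f := fun y => (-s) * (f y - f x))
      continuous_exp.continuousOn isClosed_univ
      (by simp) ((hfi.sub (integrable_const (f x))).const_mul (-s)) (hexp (-s) (f x))
    refine le_trans (le_of_eq ?_) h
    congr 1
    rw [integral_const_mul, integral_sub hfi (integrable_const _)]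
    simp
    ring
  calc mgf (fun x => f x - m) μ s = ∫ x, exp (s * (f x - m)) ∂μ := rfl
    _ ≤ ∫ x, ∫ y, exp ((-s) * (f y - f x)) ∂μ ∂μ :=
        integral_mono (hexp s m) (hpi (-s)).integral_prod_left hj
    _ = ∫ p : EE × EE, exp ((-s) * (f p.2 - f p.1)) ∂(μ.prod μ) :=
        (integral_prod _ (hpi (-s))).symm
    _ ≤ _ := hpb (-s)
    _ = _ := by congr 1; ring

end GaussConc

/-- Gaussian concentration for Lipschitz (gradient-bounded) functions: there is a
universal constant `K > 0` such that for any differentiable `f : ℝⁿ → ℝ` with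
`‖∇f(x)‖₂ ≤ L` everywhere and `X ∼ N(0, Iₙ)`,
`Pr[|f(X) − E f(X)| ≥ t] ≤ 2·exp(−t²/(K·L²))`. -/
theorem gaussian_lipschitz_concentration :
    ∃ K : ℝ, 0 < K ∧
      ∀ (n : ℕ) (f : EuclideanSpace ℝ (Fin n) → ℝ) (L t : ℝ),
        Differentiable ℝ f → (∀ x, ‖fderiv ℝ f x‖ ≤ L) → 0 ≤ t →
        (Measure.map (⇑(EuclideanSpace.equiv (Fin n) ℝ).symm)
            (Measure.pi fun _ : Fin n => gaussianReal 0 1))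
          {x | t ≤ |f x - ∫ y, f y ∂(Measure.map (⇑(EuclideanSpace.equiv (Fin n) ℝ).symm)
              (Measure.pi fun _ : Fin n => gaussianReal 0 1))|}
          ≤ ENNReal.ofReal (2 * Real.exp (-t ^ 2 / (K * L ^ 2))) := by
  refine ⟨π ^ 2 / 2, by positivity, ?_⟩
  intro n f L t hf hL ht
  have hμ : Measure.map (⇑(EuclideanSpace.equiv (Fin n) ℝ).symm)
      (Measure.pi fun _ : Fin n => gaussianReal 0 1) = stdGaussian (EuclideanSpace ℝ (Fin n)) :=
    map_pi_eq_stdGaussian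
  rw [hμ]
  set μ := stdGaussian (EuclideanSpace ℝ (Fin n))
  have hs := GaussConc.subG f L hf hL
  have h1 := hs.measure_ge_le ht
  have h2 := hs.neg.measure_ge_le ht
  have he : -t ^ 2 / (2 * ((((π / 2) ^ 2 * L ^ 2).toNNReal : NNReal) : ℝ)) =
      -t ^ 2 / (π ^ 2 / 2 * L ^ 2) := by
    rw [Real.coe_toNNReal _ (by positivity)]
    congr 1
    ring
  rw [he] at h1 h2
  rw [ENNReal.le_ofReal_iff_toReal_le (measure_ne_top _ _) (by positivity)]
  change μ.real _ ≤ _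
  calc _ ≤ μ.real ({x | t ≤ f x - ∫ y, f y ∂μ} ∪
        {x | t ≤ (-fun x => f x - ∫ y, f y ∂μ) x}) := by
        refine measureReal_mono ?_
        intro x hx
        have hx' : t ≤ |f x - ∫ y, f y ∂μ| := hx
        exact le_abs.1 hx'
    _ ≤ _ := measureReal_union_le _ _
    _ ≤ _ := by linarith
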